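/- Let v⁺, v⁻ : ℝ² → ℝ be three times continuously differentiable (ContDiff ℝ 3), fix (x,y) ∈ ℝ², and for each h > 0 let ξ_h ∈ [x, x+h] (the horizontal intersection abscissa of the interface with the grid line). Define the jumps at (ξ_h, y) by [v] = v⁺(ξ_h,y) − v⁻(ξ_h,y), [v_x] = ∂_x v⁺(ξ_h,y) − ∂_x v⁻(ξ_h,y), [v_xx] = ∂_xx v⁺(ξ_h,y) − ∂_xx v⁻(ξ_h,y). Define the horizontal truncation error at the exterior node, E_h = (v⁻(x+h,y) + v⁺(x−h,y) − 2·v⁺(x,y))/h² − ∂_xx v⁺(x,y), and the correction C_h⁺ = −(1/h²)·([v] + [v_x]·(x+h−ξ_h) + (1/2)·[v_xx]·(x+h−ξ_h)²). Then there exist constants C > 0 and δ > 0 such that for all 0 < h < δ and any choice of ξ_h ∈ [x, x+h], |E_h − C_h⁺| ≤ C·h. -/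

import Mathlib

lemma kfbi_taylor (g : ℝ → ℝ) (hg : ContDiff ℝ 3 g) (x : ℝ) :
    ∃ M : ℝ, 0 ≤ M ∧ ∀ a ∈ Set.Icc (x - 1) (x + 1), ∀ b ∈ Set.Icc (x - 1) (x + 1),
      |g b - (g a + deriv g a * (b - a) + (1 / 2) * iteratedDeriv 2 g a * (b - a) ^ 2)|
        ≤ M * |b - a| ^ 3 := by
  have hc : Continuous (iteratedDeriv 3 g) := hg.continuous_iteratedDeriv 3 (by norm_num)
  obtain ⟨M, hM⟩ := (isCompact_Icc (a := x - 1) (b := x + 1)).exists_bound_of_continuousOn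
    hc.continuousOn
  refine ⟨|M|, abs_nonneg _, fun a ha b hb => ?_⟩
  rcases eq_or_ne a b with rfl | hab
  · simp
  obtain ⟨c, hcm, hce⟩ := taylor_mean_remainder_lagrange_iteratedDeriv (n := 2) hab
    (hg.contDiffOn (s := Set.uIcc a b))
  have hu : UniqueDiffOn ℝ (Set.uIcc a b) := uniqueDiffOn_uIcc hab
  have h1 : iteratedDerivWithin 1 g (Set.uIcc a b) a = deriv g a := by
    rw [iteratedDerivWithin_eq_iteratedDeriv hu (hg.contDiffAt.of_le (by norm_num))
      Set.left_mem_uIcc, iteratedDeriv_one]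
  have h2 : iteratedDerivWithin 2 g (Set.uIcc a b) a = iteratedDeriv 2 g a := 
    iteratedDerivWithin_eq_iteratedDeriv hu (hg.contDiffAt.of_le (by norm_num))
      Set.left_mem_uIcc
  have hT : taylorWithinEval g 2 (Set.uIcc a b) a b =
      g a + deriv g a * (b - a) + (1 / 2) * iteratedDeriv 2 g a * (b - a) ^ 2 := by
    rw [taylorWithinEval_succ, taylorWithinEval_succ, taylor_within_zero_eval]
    simp only [zero_add, h1, Nat.reduceAdd, h2, smul_eq_mul]
    norm_num [Nat.factorial]
    ring
  rw [hT] at hce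
  rw [hce]
  have hcI : c ∈ Set.Icc (x - 1) (x + 1) :=
    Set.uIcc_subset_Icc ha hb (Set.uIoo_subset_uIcc_self hcm)
  have hb3 := (hM c hcI).trans (le_abs_self M)
  rw [Real.norm_eq_abs] at hb3
  rw [abs_div, abs_mul, abs_pow]
  have hp : 0 ≤ |b - a| ^ 3 := by positivity
  norm_num [Nat.factorial]
  have := mul_le_mul_of_nonneg_right hb3 hp
  have h0 : 0 ≤ |M| * |b - a| ^ 3 := by positivity
  linarith

/-- First-order accuracy of the KFBI horizontal correction at an exterior
irregular node: the corrected truncation error is `O(h)`. -/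
theorem kfbi_horizontal_correction_exterior_first_order
    (vp vm : ℝ × ℝ → ℝ) (hvp : ContDiff ℝ 3 vp) (hvm : ContDiff ℝ 3 vm)
    (x y : ℝ) :
    ∃ C > 0, ∃ δ > 0, ∀ h : ℝ, 0 < h → h < δ →
      ∀ ξ : ℝ, ξ ∈ Set.Icc x (x + h) →
      |((vm (x + h, y) + vp (x - h, y) - 2 * vp (x, y)) / h ^ 2
            - iteratedDeriv 2 (fun t => vp (t, y)) x)
        - (-(1 / h ^ 2) *
            ((vp (ξ, y) - vm (ξ, y))
              + (deriv (fun t => vp (t, y)) ξ - deriv (fun t => vm (t, y)) ξ) * (x + h - ξ)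
              + (1 / 2) *
                  (iteratedDeriv 2 (fun t => vp (t, y)) ξ
                    - iteratedDeriv 2 (fun t => vm (t, y)) ξ) * (x + h - ξ) ^ 2))|
        ≤ C * h := by
  have hl : ContDiff ℝ 3 (fun t : ℝ => (t, y)) := by fun_prop
  obtain ⟨P, hP0, hP⟩ := kfbi_taylor (fun t => vp (t, y)) (hvp.comp hl) x
  obtain ⟨Q, hQ0, hQ⟩ := kfbi_taylor (fun t => vm (t, y)) (hvm.comp hl) x
  refine ⟨3 * P + Q + 1, by positivity, 1, one_pos, fun h h0 h1 ξ hξ => ?_⟩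
  obtain ⟨hξ1, hξ2⟩ := hξ
  have mx : x ∈ Set.Icc (x - 1) (x + 1) := ⟨by linarith, by linarith⟩
  have mp : x + h ∈ Set.Icc (x - 1) (x + 1) := ⟨by linarith, by linarith⟩
  have mm : x - h ∈ Set.Icc (x - 1) (x + 1) := ⟨by linarith, by linarith⟩
  have mξ : ξ ∈ Set.Icc (x - 1) (x + 1) := ⟨by linarith, by linarith⟩
  have key : ∀ M d : ℝ, 0 ≤ M → |d| ≤ h → M * |d| ^ 3 ≤ M * h ^ 3 := by
    intro M d hM hd
    gcongr
  have dξ : |x + h - ξ| ≤ h := by rw [abs_le]; constructor <;> linarith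
  have b1 := (hQ ξ mξ _ mp).trans (key Q _ hQ0 dξ)
  have b2 := (hP ξ mξ _ mp).trans (key P _ hP0 dξ)
  have b3 := (hP x mx _ mp).trans (key P _ hP0 (by rw [abs_le]; constructor <;> linarith))
  have b4 := (hP x mx _ mm).trans (key P _ hP0 (by rw [abs_le]; constructor <;> linarith))
  have h3 : 0 < h ^ 3 := by positivity
  rw [abs_le] at b1 b2 b3 b4
  generalize iteratedDeriv 2 (fun t => vp (t, y)) ξ = p2 at *
  generalize iteratedDeriv 2 (fun t => vm (t, y)) ξ = m2 at *
  generalize iteratedDeriv 2 (fun t => vp (t, y)) x = p2x at *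
  generalize deriv (fun t => vp (t, y)) ξ = p1 at *
  generalize deriv (fun t => vm (t, y)) ξ = m1 at *
  generalize deriv (fun t => vp (t, y)) x = p1x at *
  have hne : h ≠ 0 := h0.ne'
  have e : ∀ A B J : ℝ, A / h ^ 2 - B - (-(1 / h ^ 2) * J) = (A - h ^ 2 * B + J) / h ^ 2 := by
    intro A B J
    field_simp
    ring
  rw [e, abs_div, abs_of_pos (by positivity : 0 < h ^ 2), div_le_iff₀ (by positivity), abs_le]
  obtain ⟨b1, b1'⟩ := b1
  obtain ⟨b2, b2'⟩ := b2
  obtain ⟨b3, b3'⟩ := b3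
  obtain ⟨b4, b4'⟩ := b4
  constructor <;> nlinarith
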